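/- Fix μ ∈ (0, 2], an integer q ≥ 1 and J > 0, define Φ_μ(ν) = (πν / cos(πν/2))² · (πν / sin(πν))^{μ/2 − 1} for ν ∈ (0,1), and for each β > 0 let ν(β) denote the unique ν ∈ (0,1) satisfying μ q (β² J² / 2^q)^{μ/2} = Φ_μ(ν). Then lim_{β → 0⁺} ν(β) / β^{μ/2} = √(μ q) · J^{μ/2} / (π · 2^{q μ / 4}). -/

import Mathlib

open Real Filter

/-!
Put `x = πν`. Then `Φ_μ(ν) = x² · φ(x)` with `φ(x) = cos(x/2)⁻² (sinc x)⁻¹ ^ (μ/2 - 1)`, which is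
continuous at `0` with `φ(0) = 1`. On `(0, π)` we have `cos(x/2)² ≤ sinc x ≤ 1`, hence `φ ≥ 1` and
`πν ≤ √Φ_μ(ν)`. Along solutions of the closure condition `√Φ_μ(ν(β))` is a constant times
`β^{μ/2}`, so it vanishes as `β → 0⁺`; therefore `ν(β) → 0`, and then `ν(β) / √Φ_μ(ν(β)) → 1/π`.
-/

open scoped Topology

/-- The closure function `Φ_μ(ν)` of the large-`q` Lévy SYK model, meaningful for `ν ∈ (0, 1)`. -/
noncomputable def closureFunction (μ ν : ℝ) : ℝ :=
  (π * ν / cos (π * ν / 2)) ^ 2 * (π * ν / sin (π * ν)) ^ (μ / 2 - 1)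

/-- The ratio `φ(x) = Φ_μ(ν) / x²` at `x = πν`, written with `sinc` so that it extends continuously
to `x = 0`. -/
noncomputable def closureRatio (μ x : ℝ) : ℝ :=
  (cos (x / 2) ^ 2)⁻¹ * (sinc x)⁻¹ ^ (μ / 2 - 1)

theorem closureFunction_eq_sq_mul_closureRatio (μ ν : ℝ) :
    closureFunction μ ν = (π * ν) ^ 2 * closureRatio μ (π * ν) := by
  unfold closureFunction closureRatio
  rcases eq_or_ne (π * ν) 0 with hx | hx
  · simp [hx]
  · rw [sinc_of_ne_zero hx, inv_div]
    ring

theorem tendsto_closureRatio_nhds_zero (μ : ℝ) : Tendsto (closureRatio μ) (𝓝 0) (𝓝 1) := by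
  have hcos : Tendsto (fun x : ℝ => (cos (x / 2) ^ 2)⁻¹) (𝓝 0) (𝓝 1) := by
    have hcont : Continuous fun x : ℝ => cos (x / 2) ^ 2 := by fun_prop
    simpa using (hcont.tendsto 0).inv₀ (by simp)
  have hsinc : Tendsto (fun x : ℝ => (sinc x)⁻¹) (𝓝 0) (𝓝 1) := by
    simpa using (continuous_sinc.tendsto 0).inv₀ (by simp)
  have hmul := hcos.mul (hsinc.rpow_const (p := μ / 2 - 1) (Or.inl one_ne_zero))
  rwa [one_rpow, mul_one] at hmul

theorem sq_cos_half_le_sinc {x : ℝ} (hx₀ : 0 < x) (hxπ : x < π) : cos (x / 2) ^ 2 ≤ sinc x := by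
  have hcos : 0 < cos (x / 2) := cos_pos_of_mem_Ioo ⟨by linarith, by linarith⟩
  have htan : x / 2 * cos (x / 2) ≤ sin (x / 2) := by
    rw [← le_div_iff₀ hcos, ← tan_eq_sin_div_cos]
    exact le_tan (by linarith) (by linarith)
  rw [sinc_of_ne_zero hx₀.ne', le_div_iff₀ hx₀]
  calc cos (x / 2) ^ 2 * x = 2 * (x / 2 * cos (x / 2)) * cos (x / 2) := by ring
    _ ≤ 2 * sin (x / 2) * cos (x / 2) := by gcongr
    _ = sin x := by rw [← sin_two_mul, mul_div_cancel₀ x two_ne_zero]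

theorem one_le_closureRatio {μ x : ℝ} (hμ : 0 ≤ μ) (hx₀ : 0 < x) (hxπ : x < π) :
    1 ≤ closureRatio μ x := by
  have hcos : 0 < cos (x / 2) := cos_pos_of_mem_Ioo ⟨by linarith, by linarith⟩
  have hsinc : 0 < sinc x := (pow_pos hcos 2).trans_le (sq_cos_half_le_sinc hx₀ hxπ)
  have hinv : 1 ≤ (sinc x)⁻¹ := (one_le_inv₀ hsinc).2 (sinc_le_one x)
  rw [closureRatio, ← div_eq_inv_mul, one_le_div (pow_pos hcos 2)]
  calc cos (x / 2) ^ 2 ≤ sinc x := sq_cos_half_le_sinc hx₀ hxπ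
    _ = (sinc x)⁻¹ ^ (-1 : ℝ) := by rw [rpow_neg_one, inv_inv]
    _ ≤ (sinc x)⁻¹ ^ (μ / 2 - 1) := rpow_le_rpow_of_exponent_le hinv (by linarith)

theorem pi_mul_le_sqrt_closureFunction {μ ν : ℝ} (hμ : 0 ≤ μ) (hν : ν ∈ Set.Ioo (0 : ℝ) 1) :
    π * ν ≤ √(closureFunction μ ν) := by
  have hratio : 1 ≤ closureRatio μ (π * ν) :=
    one_le_closureRatio hμ (mul_pos pi_pos hν.1) (mul_lt_of_lt_one_right pi_pos hν.2)
  rw [closureFunction_eq_sq_mul_closureRatio]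
  exact le_sqrt_of_sq_le (le_mul_of_one_le_right (sq_nonneg _) hratio)

theorem tendsto_div_sqrt_closureFunction_nhdsGT_zero (μ : ℝ) :
    Tendsto (fun ν => ν / √(closureFunction μ ν)) (𝓝[>] 0) (𝓝 π⁻¹) := by
  have hscale : Tendsto (fun ν : ℝ => π * ν) (𝓝[>] 0) (𝓝 0) :=
    ((continuous_const_mul π).tendsto' 0 0 (mul_zero π)).mono_left nhdsWithin_le_nhds
  have hratio : Tendsto (fun ν => π⁻¹ * (√(closureRatio μ (π * ν)))⁻¹) (𝓝[>] 0) (𝓝 π⁻¹) := by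
    simpa using
      (((tendsto_closureRatio_nhds_zero μ).comp hscale).sqrt.inv₀ (by simp)).const_mul π⁻¹
  refine hratio.congr' ?_
  filter_upwards [self_mem_nhdsWithin] with ν (hν : 0 < ν)
  rw [closureFunction_eq_sq_mul_closureRatio, sqrt_mul (sq_nonneg _), sqrt_sq (by positivity)]
  field_simp

theorem tendsto_div_sqrt_closureFunction {ι : Type*} {l : Filter ι} {μ : ℝ} {ν : ι → ℝ}
    (hμ : 0 ≤ μ) (hν : ∀ᶠ i in l, ν i ∈ Set.Ioo (0 : ℝ) 1)
    (hΦ : Tendsto (fun i => √(closureFunction μ (ν i))) l (𝓝 0)) :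
    Tendsto (fun i => ν i / √(closureFunction μ (ν i))) l (𝓝 π⁻¹) := by
  have hle : ∀ᶠ i in l, ν i ≤ π⁻¹ * √(closureFunction μ (ν i)) :=
    hν.mono fun i hi => (le_inv_mul_iff₀ pi_pos).2 (pi_mul_le_sqrt_closureFunction hμ hi)
  have hzero : Tendsto ν l (𝓝 0) :=
    squeeze_zero' (hν.mono fun i hi => hi.1.le) hle (by simpa using hΦ.const_mul π⁻¹)
  exact (tendsto_div_sqrt_closureFunction_nhdsGT_zero μ).comp
    (tendsto_nhdsWithin_iff.2 ⟨hzero, hν.mono fun i hi => hi.1⟩)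

theorem sqrt_mul_sq_mul_sq_div_rpow_rpow (c q p : ℝ) {a β J : ℝ} (ha : 0 ≤ a) (hβ : 0 ≤ β)
    (hJ : 0 ≤ J) :
    √(c * (β ^ 2 * J ^ 2 / a ^ q) ^ p) = √c * J ^ p / a ^ (q / 2 * p) * β ^ p := by
  have hsq : β ^ 2 * J ^ 2 / a ^ q = (β * J / a ^ (q / 2)) ^ 2 := by
    rw [div_pow, mul_pow, ← rpow_mul_natCast ha, Nat.cast_two, div_mul_cancel₀ q two_ne_zero]
  calc √(c * (β ^ 2 * J ^ 2 / a ^ q) ^ p)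
      = √(c * ((β * J / a ^ (q / 2)) ^ p) ^ 2) := by rw [hsq, rpow_pow_comm (by positivity)]
    _ = √c * (β * J / a ^ (q / 2)) ^ p := by
      rw [sqrt_mul' _ (sq_nonneg _), sqrt_sq (by positivity)]
    _ = √c * J ^ p / a ^ (q / 2 * p) * β ^ p := by
      rw [div_rpow (by positivity) (by positivity), mul_rpow hβ hJ, ← rpow_mul ha]
      ring

theorem closure_solution_small_beta_scaling_general {μ q J : ℝ} (hμ : 0 < μ) (hJ : 0 ≤ J)
    {ν : ℝ → ℝ} (hmem : ∀ᶠ β in 𝓝[>] 0, ν β ∈ Set.Ioo (0 : ℝ) 1)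
    (hclosure : ∀ᶠ β in 𝓝[>] 0,
      μ * q * (β ^ 2 * J ^ 2 / 2 ^ q) ^ (μ / 2) = closureFunction μ (ν β)) :
    Tendsto (fun β : ℝ => ν β / β ^ (μ / 2)) (𝓝[>] 0)
      (𝓝 (√(μ * q) * J ^ (μ / 2) / (π * 2 ^ (q * μ / 4)))) := by
  set C : ℝ := √(μ * q) * J ^ (μ / 2) / 2 ^ (q * μ / 4) with hC
  have hsqrt : ∀ᶠ β in 𝓝[>] 0, √(closureFunction μ (ν β)) = C * β ^ (μ / 2) := by
    filter_upwards [hclosure, self_mem_nhdsWithin] with β hβ (hβ₀ : 0 < β)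
    rw [← hβ, sqrt_mul_sq_mul_sq_div_rpow_rpow _ _ _ two_pos.le hβ₀.le hJ, hC,
      show q / 2 * (μ / 2) = q * μ / 4 by ring]
  have hpow : Tendsto (fun β : ℝ => C * β ^ (μ / 2)) (𝓝[>] 0) (𝓝 0) := by
    have hcont := (continuous_rpow_const (half_pos hμ).le).const_mul C
    exact (hcont.tendsto' 0 0 (by simp [hμ.ne'])).mono_left nhdsWithin_le_nhds
  have hlim := (tendsto_div_sqrt_closureFunction hμ.le hmem
    (hpow.congr' (hsqrt.mono fun _ h => h.symm))).mul_const C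
  have hlimit : √(μ * q) * J ^ (μ / 2) / (π * 2 ^ (q * μ / 4)) = π⁻¹ * C := by
    rw [hC]
    field_simp
  rw [hlimit]
  refine hlim.congr' ?_
  filter_upwards [hmem, hsqrt] with β hβ hβsqrt
  have hpos : 0 < C * β ^ (μ / 2) :=
    hβsqrt ▸ (mul_pos pi_pos hβ.1).trans_le (pi_mul_le_sqrt_closureFunction hμ.le hβ)
  rw [hβsqrt, div_mul_eq_mul_div, mul_comm C, mul_div_mul_right _ _ (left_ne_zero_of_mul hpos.ne')]

/-- Small-`β` scaling of the solution of the large-`q` closure condition: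
`ν(β)/β^{μ/2} → √(μq) J^{μ/2} / (π 2^{qμ/4})` as `β → 0⁺`. -/
theorem closure_solution_small_beta_scaling (μ : ℝ) (hμ : μ ∈ Set.Ioc (0 : ℝ) 2)
    (q : ℕ) (hq : 1 ≤ q) (J : ℝ) (hJ : 0 < J) (ν : ℝ → ℝ)
    (hmem : ∀ β > (0 : ℝ), ν β ∈ Set.Ioo (0 : ℝ) 1)
    (hclosure : ∀ β > (0 : ℝ),
      μ * (q : ℝ) * (β ^ 2 * J ^ 2 / 2 ^ q) ^ (μ / 2) =
        (π * ν β / Real.cos (π * ν β / 2)) ^ 2 *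
          (π * ν β / Real.sin (π * ν β)) ^ (μ / 2 - 1)) :
    Tendsto (fun β : ℝ => ν β / β ^ (μ / 2)) (nhdsWithin 0 (Set.Ioi 0))
      (nhds (Real.sqrt (μ * (q : ℝ)) * J ^ (μ / 2) / (π * 2 ^ ((q : ℝ) * μ / 4)))) :=
  closure_solution_small_beta_scaling_general hμ.1 hJ.le (eventually_mem_nhdsWithin.mono hmem)
    (eventually_mem_nhdsWithin.mono fun β hβ => by rw [rpow_natCast]; exact hclosure β hβ)
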